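/- Let γ be an affinely parametrized null geodesic of a warped product M̂ ×_f Y, and E(u) the parallel transport along γ of a vector e with e^i = 0 that is orthogonal to N(0); let b := g(e,e) and C the constant with ḡ(N̄,N̄) = C/f⁴. Then Ē^i = f h N̄^i with h solving dh/du = Ê^a ∂_a(1/f), h(0)=0; one has ĝ(Ê,Ê) + C h² = b and ĝ(N̂,Ê) = −C h/f; the vector field ℰ̂^a := Ê^a − f h N̂^a along γ satisfies ĝ(ℰ̂,ℰ̂) = b, ĝ(N̂,ℰ̂) = 0, N̂^b ∇̂_b ℰ̂^a = −(d(hf)/du) N̂^a, and ℰ̂^a(0) = e^a; and, whenever C ≠ 0 (so the base projection γ̂ is a timelike curve of (M̂, ĝ)), ℰ̂ is Fermi–Walker transported along γ̂. -/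

import Mathlib

open Filter MeasureTheory
open scoped BigOperators Topology

noncomputable section

namespace Paper

variable {ι : Type*} [Fintype ι] [DecidableEq ι]
variable {κ : Type*} [Fintype κ] [DecidableEq κ]

/-- Coordinate partial derivative of a scalar field in the direction `ρ`. -/
def pd (h : (ι → ℝ) → ℝ) (ρ : ι) (x : ι → ℝ) : ℝ :=
  fderiv ℝ h x (Pi.single ρ 1)

/-- The inverse metric. -/
def ginv (g : (ι → ℝ) → Matrix ι ι ℝ) (x : ι → ℝ) : Matrix ι ι ℝ :=
  (g x)⁻¹

/-- Christoffel symbols `Γ^μ_{ρσ} = ½ g^{μν}(∂_ρ g_{νσ} + ∂_σ g_{νρ} − ∂_ν g_{ρσ})`. -/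
def Γc (g : (ι → ℝ) → Matrix ι ι ℝ) (μ ρ σ : ι) (x : ι → ℝ) : ℝ :=
  (1 / 2) * ∑ ν, ginv g x μ ν *
    (pd (fun y => g y ν σ) ρ x + pd (fun y => g y ν ρ) σ x - pd (fun y => g y ρ σ) ν x)

/-- Riemann curvature tensor `R^α_{βμν}`. -/
def Riem (g : (ι → ℝ) → Matrix ι ι ℝ) (α β μ ν : ι) (x : ι → ℝ) : ℝ :=
  pd (Γc g α ν β) μ x - pd (Γc g α μ β) ν x
    + ∑ lam, Γc g α μ lam x * Γc g lam ν β x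
    - ∑ lam, Γc g α ν lam x * Γc g lam μ β x

/-- Riemann tensor with the first index lowered, `R_{μνρσ} = g_{μλ} R^λ_{νρσ}`. -/
def RiemLow (g : (ι → ℝ) → Matrix ι ι ℝ) (μ ν ρ σ : ι) (x : ι → ℝ) : ℝ :=
  ∑ lam, g x μ lam * Riem g lam ν ρ σ x

/-- Ricci tensor `R_{μν} = R^ρ_{μρν}`. -/
def Ric (g : (ι → ℝ) → Matrix ι ι ℝ) (μ ν : ι) (x : ι → ℝ) : ℝ :=
  ∑ ρ, Riem g ρ μ ρ ν x

/-- Scalar product of two vectors with respect to the metric at `x`. -/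
def sq (g : (ι → ℝ) → Matrix ι ι ℝ) (x : ι → ℝ) (v w : ι → ℝ) : ℝ :=
  ∑ μ, ∑ ν, g x μ ν * v μ * w ν

/-- Velocity (tangent vector field) of a parametrized curve. -/
def vel (γ : ℝ → ι → ℝ) (u : ℝ) : ι → ℝ :=
  fun μ => deriv (fun w => γ w μ) u

/-- Covariant derivative, along the curve `γ`, of a vector field `V` given along `γ`. -/
def covD (g : (ι → ℝ) → Matrix ι ι ℝ) (γ V : ℝ → ι → ℝ) (u : ℝ) (μ : ι) : ℝ :=
  deriv (fun w => V w μ) u + ∑ ρ, ∑ σ, Γc g μ ρ σ (γ u) * vel γ u ρ * V u σ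

/-- The (affinely parametrized) geodesic equation at parameter value `u`. -/
def GeodesicAt (g : (ι → ℝ) → Matrix ι ι ℝ) (γ : ℝ → ι → ℝ) (u : ℝ) : Prop :=
  ∀ μ, covD g γ (vel γ) u μ = 0

/-- `γ` is an affinely parametrized geodesic of `g`. -/
def IsGeodesic (g : (ι → ℝ) → Matrix ι ι ℝ) (γ : ℝ → ι → ℝ) : Prop :=
  ∀ u, GeodesicAt g γ u

/-- `E` is parallelly transported along `γ`. -/
def IsParallel (g : (ι → ℝ) → Matrix ι ι ℝ) (γ E : ℝ → ι → ℝ) : Prop :=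
  ∀ u μ, covD g γ E u μ = 0

def SmoothCurve (γ : ℝ → ι → ℝ) : Prop :=
  ∀ μ, ContDiff ℝ (⊤ : ℕ∞) fun u => γ u μ

/-- A smooth symmetric everywhere-nondegenerate metric. -/
def SmoothMetric (g : (ι → ℝ) → Matrix ι ι ℝ) : Prop :=
  (∀ μ ν, ContDiff ℝ (⊤ : ℕ∞) fun x => g x μ ν) ∧
    (∀ x μ ν, g x μ ν = g x ν μ) ∧ ∀ x, IsUnit (g x).det

/-- Lorentzian signature `(−,+,…,+)`: there is a timelike vector whose `g`-orthogonal
complement is positive definite. -/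
def Lorentzian (g : (ι → ℝ) → Matrix ι ι ℝ) : Prop :=
  SmoothMetric g ∧
    ∀ x, ∃ t : ι → ℝ, sq g x t t < 0 ∧ ∀ v : ι → ℝ, sq g x t v = 0 → v ≠ 0 → 0 < sq g x v v

/-- Riemannian (positive definite) metric. -/
def Riemannian (g : (ι → ℝ) → Matrix ι ι ℝ) : Prop :=
  SmoothMetric g ∧ ∀ x, ∀ v : ι → ℝ, v ≠ 0 → 0 < sq g x v v

def NullVec (g : (ι → ℝ) → Matrix ι ι ℝ) (x v : ι → ℝ) : Prop :=
  sq g x v v = 0 ∧ v ≠ 0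

/-- A time orientation: an everywhere timelike vector field. -/
def TimeOrientation (g : (ι → ℝ) → Matrix ι ι ℝ) (T : (ι → ℝ) → ι → ℝ) : Prop :=
  ∀ x, sq g x (T x) (T x) < 0

/-- `v` is a future-pointing causal vector at `x` (wrt the time orientation `T`). -/
def FutureCausal (g : (ι → ℝ) → Matrix ι ι ℝ) (T : (ι → ℝ) → ι → ℝ) (x v : ι → ℝ) : Prop :=
  sq g x v v ≤ 0 ∧ v ≠ 0 ∧ sq g x (T x) v < 0

/-- `S` is met exactly once by every inextendible future-directed causal curve
(inextendibility being encoded by parametrization by Euclidean arclength on all of `ℝ`). -/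
def IsCauchySurface (g : (ι → ℝ) → Matrix ι ι ℝ) (T : (ι → ℝ) → ι → ℝ)
    (S : Set (ι → ℝ)) : Prop :=
  ∀ γ : ℝ → ι → ℝ, (∀ μ, Differentiable ℝ fun u => γ u μ) →
    (∀ u, FutureCausal g T (γ u) (vel γ u)) →
    (∀ u, ∑ μ, (vel γ u μ) ^ 2 = 1) → ∃! u, γ u ∈ S

/-- `g`-gradient vector of a scalar function. -/
def gradVec (g : (ι → ℝ) → Matrix ι ι ℝ) (τ : (ι → ℝ) → ℝ) (x : ι → ℝ) : ι → ℝ :=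
  fun μ => ∑ ν, ginv g x μ ν * pd τ ν x

/-- Existence of a non-compact (spacelike) Cauchy hypersurface, encoded as a regular
level set of a smooth function with timelike gradient. -/
def HasNoncompactCauchySurface (g : (ι → ℝ) → Matrix ι ι ℝ)
    (T : (ι → ℝ) → ι → ℝ) : Prop :=
  ∃ τ : (ι → ℝ) → ℝ, ContDiff ℝ (⊤ : ℕ∞) τ ∧ ¬ IsCompact {x | τ x = 0} ∧
    (∀ x, τ x = 0 → sq g x (gradVec g τ x) (gradVec g τ x) < 0) ∧
    IsCauchySurface g T {x | τ x = 0}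

/-- Null geodesic completeness: every null initial datum extends to a geodesic
defined for all values of the affine parameter. -/
def NullComplete (g : (ι → ℝ) → Matrix ι ι ℝ) : Prop :=
  ∀ x v : ι → ℝ, NullVec g x v →
    ∃ γ : ℝ → ι → ℝ, SmoothCurve γ ∧ γ 0 = x ∧ vel γ 0 = v ∧ IsGeodesic g γ

/-- Future null geodesic completeness. -/
def FutureNullComplete (g : (ι → ℝ) → Matrix ι ι ℝ) (T : (ι → ℝ) → ι → ℝ) : Prop :=
  ∀ x v : ι → ℝ, NullVec g x v → FutureCausal g T x v →
    ∃ γ : ℝ → ι → ℝ, SmoothCurve γ ∧ γ 0 = x ∧ vel γ 0 = v ∧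
      ∀ u, 0 ≤ u → GeodesicAt g γ u

/-! ### Submanifolds given implicitly as regular zero sets -/

/-- Differential (lowered normal covectors) of the defining map `F`. -/
def dFm (F : (ι → ℝ) → κ → ℝ) (α : κ) (μ : ι) (x : ι → ℝ) : ℝ :=
  pd (fun y => F y α) μ x

/-- The normal vectors `ν_α = grad F^α` spanning the normal space. -/
def normalBasis (g : (ι → ℝ) → Matrix ι ι ℝ) (F : (ι → ℝ) → κ → ℝ) (α : κ)
    (x : ι → ℝ) : ι → ℝ :=
  fun μ => ∑ ν, ginv g x μ ν * dFm F α ν x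

/-- Gram matrix `W_{αβ} = g(ν_α, ν_β)` of the normals. -/
def gram (g : (ι → ℝ) → Matrix ι ι ℝ) (F : (ι → ℝ) → κ → ℝ) (x : ι → ℝ) :
    Matrix κ κ ℝ :=
  Matrix.of fun α β => ∑ μ, dFm F α μ x * normalBasis g F β x μ

/-- The (contravariant) orthogonal projector onto the tangent space of `{F = 0}`. -/
def tanProj (g : (ι → ℝ) → Matrix ι ι ℝ) (F : (ι → ℝ) → κ → ℝ) (x : ι → ℝ)
    (μ ν : ι) : ℝ :=
  ginv g x μ ν -
    ∑ α, ∑ β, (gram g F x)⁻¹ α β * normalBasis g F α x μ * normalBasis g F β x ν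

/-- Covariant Hessian `∇_μ ∇_ν F^α`. -/
def hessF (g : (ι → ℝ) → Matrix ι ι ℝ) (F : (ι → ℝ) → κ → ℝ) (α : κ) (μ ν : ι)
    (x : ι → ℝ) : ℝ :=
  pd (fun y => dFm F α ν y) μ x - ∑ lam, Γc g lam μ ν x * dFm F α lam x

/-- The expansion `θ(n)` of the submanifold `{F = 0}` along the normal
`n = ∑ c_α ν_α`, namely `θ(n) = ∑_α c_α h^{μν} ∇_μ∇_ν F^α`. -/
def expansionCoeff (g : (ι → ℝ) → Matrix ι ι ℝ) (F : (ι → ℝ) → κ → ℝ) (x : ι → ℝ)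
    (c : κ → ℝ) : ℝ :=
  ∑ α, c α * ∑ μ, ∑ ν, tanProj g F x μ ν * hessF g F α μ ν x

/-- `v` is tangent to the level set `{F = 0}` at `x`. -/
def TangentTo (F : (ι → ℝ) → κ → ℝ) (x v : ι → ℝ) : Prop :=
  ∀ α, ∑ μ, dFm F α μ x * v μ = 0

/-- The normal vector with components `c` in the basis of normals. -/
def NormalComb (g : (ι → ℝ) → Matrix ι ι ℝ) (F : (ι → ℝ) → κ → ℝ) (x : ι → ℝ)
    (c : κ → ℝ) : ι → ℝ :=
  fun μ => ∑ α, c α * normalBasis g F α x μ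

/-- A closed (compact without boundary) spacelike submanifold, given as the regular
zero set of the smooth map `F`, of co-dimension `card κ`. -/
def ClosedSpacelikeSubmanifold (g : (ι → ℝ) → Matrix ι ι ℝ)
    (F : (ι → ℝ) → κ → ℝ) : Prop :=
  (∀ α, ContDiff ℝ (⊤ : ℕ∞) fun x => F x α) ∧
    IsCompact {x | ∀ α, F x α = 0} ∧ {x | ∀ α, F x α = 0}.Nonempty ∧
    (∀ x, (∀ α, F x α = 0) → IsUnit (gram g F x).det) ∧
    (∀ x, (∀ α, F x α = 0) → ∀ v, TangentTo F x v → v ≠ 0 → 0 < sq g x v v)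

/-- Future-trapped: every future-pointing causal normal has negative expansion. -/
def FutureTrapped (g : (ι → ℝ) → Matrix ι ι ℝ) (T : (ι → ℝ) → ι → ℝ)
    (F : (ι → ℝ) → κ → ℝ) : Prop :=
  ∀ x, (∀ α, F x α = 0) → ∀ c : κ → ℝ,
    FutureCausal g T x (NormalComb g F x c) → expansionCoeff g F x c < 0

/-! ### Warped products -/

def basePt {d₁ d₂ : ℕ} (x : (Fin d₁ ⊕ Fin d₂) → ℝ) : Fin d₁ → ℝ :=
  fun a => x (Sum.inl a)

def fibPt {d₁ d₂ : ℕ} (x : (Fin d₁ ⊕ Fin d₂) → ℝ) : Fin d₂ → ℝ :=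
  fun i => x (Sum.inr i)

/-- The warped product metric `g = ĝ + f² ḡ` in adapted coordinates. -/
def warped {d₁ d₂ : ℕ} (gB : (Fin d₁ → ℝ) → Matrix (Fin d₁) (Fin d₁) ℝ)
    (gF : (Fin d₂ → ℝ) → Matrix (Fin d₂) (Fin d₂) ℝ) (f : (Fin d₁ → ℝ) → ℝ) :
    ((Fin d₁ ⊕ Fin d₂) → ℝ) → Matrix (Fin d₁ ⊕ Fin d₂) (Fin d₁ ⊕ Fin d₂) ℝ :=
  fun x => Matrix.of fun μ ν =>
    match μ, ν with
    | Sum.inl a, Sum.inl b => gB (basePt x) a b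
    | Sum.inl _, Sum.inr _ => 0
    | Sum.inr _, Sum.inl _ => 0
    | Sum.inr i, Sum.inr j => (f (basePt x)) ^ 2 * gF (fibPt x) i j

/-- Projection of a spacetime curve to the base. -/
def baseCurve {d₁ d₂ : ℕ} (γ : ℝ → (Fin d₁ ⊕ Fin d₂) → ℝ) : ℝ → Fin d₁ → ℝ :=
  fun u => basePt (γ u)

/-- Projection of a spacetime curve to the fiber. -/
def fibCurve {d₁ d₂ : ℕ} (γ : ℝ → (Fin d₁ ⊕ Fin d₂) → ℝ) : ℝ → Fin d₂ → ℝ :=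
  fun u => fibPt (γ u)

/-- Lift of a base vector to the warped product (vanishing fiber components). -/
def liftVec {d₁ d₂ : ℕ} (v : Fin d₁ → ℝ) : (Fin d₁ ⊕ Fin d₂) → ℝ :=
  fun μ => match μ with
  | Sum.inl a => v a
  | Sum.inr _ => 0

/-- Lift of a base vector field (e.g. a time orientation) to the warped product. -/
def liftT {d₁ d₂ : ℕ} (T : (Fin d₁ → ℝ) → Fin d₁ → ℝ) :
    ((Fin d₁ ⊕ Fin d₂) → ℝ) → (Fin d₁ ⊕ Fin d₂) → ℝ :=
  fun x => liftVec (T (basePt x))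

/-- Defining map of the lift `ζ_p ⊆ Y_p` of the submanifold `{Fb = 0} ⊆ Y`. -/
def liftF {d₁ d₂ m' : ℕ} (p : Fin d₁ → ℝ) (Fb : (Fin d₂ → ℝ) → Fin m' → ℝ) :
    ((Fin d₁ ⊕ Fin d₂) → ℝ) → (Fin d₁ ⊕ Fin m') → ℝ :=
  fun x α => match α with
  | Sum.inl a => x (Sum.inl a) - p a
  | Sum.inr β => Fb (fibPt x) β

/-- Covariant Hessian `∇_μ∇_ν f` of a scalar function. -/
def hess (g : (ι → ℝ) → Matrix ι ι ℝ) (f : (ι → ℝ) → ℝ) (μ ν : ι) (x : ι → ℝ) : ℝ :=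
  pd (fun y => pd f ν y) μ x - ∑ lam, Γc g lam μ ν x * pd f lam x

/-- `∇^μ f ∇_μ f`. -/
def gradSq (g : (ι → ℝ) → Matrix ι ι ℝ) (f : (ι → ℝ) → ℝ) (x : ι → ℝ) : ℝ :=
  ∑ μ, ∑ ν, ginv g x μ ν * pd f μ x * pd f ν x

/-! ### Parametrized submanifolds and their expansions -/

/-- Partial derivative of a parametrization `φ`. -/
def dpar {k : ℕ} (φ : (Fin k → ℝ) → ι → ℝ) (A : Fin k) (μ : ι)
    (y : Fin k → ℝ) : ℝ :=
  fderiv ℝ (fun z => φ z μ) y (Pi.single A 1)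

/-- First fundamental form of a parametrized submanifold. -/
def firstFF {k : ℕ} (g : (ι → ℝ) → Matrix ι ι ℝ) (φ : (Fin k → ℝ) → ι → ℝ)
    (y : Fin k → ℝ) : Matrix (Fin k) (Fin k) ℝ :=
  Matrix.of fun A B => ∑ μ, ∑ ν, g (φ y) μ ν * dpar φ A μ y * dpar φ B ν y

/-- The expansion `θ(n) = n_μ H^μ` of a parametrized submanifold along a normal `n`,
via `θ(n) = −γ^{AB} n_μ (∂_A∂_B φ^μ + Γ^μ_{ρσ} ∂_A φ^ρ ∂_B φ^σ)`. -/
def expansionPar {k : ℕ} (g : (ι → ℝ) → Matrix ι ι ℝ) (φ : (Fin k → ℝ) → ι → ℝ)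
    (y : Fin k → ℝ) (n : ι → ℝ) : ℝ :=
  - ∑ A, ∑ B, (firstFF g φ y)⁻¹ A B *
      ∑ μ, (∑ ν, g (φ y) μ ν * n ν) *
        (fderiv ℝ (fun z => dpar φ B μ z) y (Pi.single A 1)
          + ∑ ρ, ∑ σ, Γc g μ ρ σ (φ y) * dpar φ A ρ y * dpar φ B σ y)

/-- The field `ℰ̂^a := Ê^a − f h N̂^a` along the base projection. -/
def calE {d₁ d₂ : ℕ} (f : (Fin d₁ → ℝ) → ℝ) (γ : ℝ → (Fin d₁ ⊕ Fin d₂) → ℝ)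
    (E : ℝ → (Fin d₁ ⊕ Fin d₂) → ℝ) (h : ℝ → ℝ) : ℝ → Fin d₁ → ℝ :=
  fun u a => E u (Sum.inl a) - f (basePt (γ u)) * h u * vel (baseCurve γ) u a

/-- Proper-time rate `s = √(−ĝ(N̂,N̂)) = √C / f` along the base projection. -/
def fwS {d₁ d₂ : ℕ} (f : (Fin d₁ → ℝ) → ℝ) (C : ℝ)
    (γ : ℝ → (Fin d₁ ⊕ Fin d₂) → ℝ) (u : ℝ) : ℝ :=
  Real.sqrt C / f (basePt (γ u))

/-- Unit tangent of the (timelike) base projection. -/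
def fwU {d₁ d₂ : ℕ} (f : (Fin d₁ → ℝ) → ℝ) (C : ℝ)
    (γ : ℝ → (Fin d₁ ⊕ Fin d₂) → ℝ) (u : ℝ) : Fin d₁ → ℝ :=
  fun a => (fwS f C γ u)⁻¹ * vel (baseCurve γ) u a

/-- Acceleration (wrt proper time) of the base projection. -/
def fwA {d₁ d₂ : ℕ} (gB : (Fin d₁ → ℝ) → Matrix (Fin d₁) (Fin d₁) ℝ)
    (f : (Fin d₁ → ℝ) → ℝ) (C : ℝ)
    (γ : ℝ → (Fin d₁ ⊕ Fin d₂) → ℝ) (u : ℝ) : Fin d₁ → ℝ :=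
  fun a => (fwS f C γ u)⁻¹ * covD gB (baseCurve γ) (fun w => fwU f C γ w) u a

set_option linter.all false
set_option linter.unusedSimpArgs false
set_option linter.unusedSectionVars false
section helpers
variable {d₁ d₂ : ℕ}

/-- base projection as a continuous linear map -/
def baseL (d₁ d₂ : ℕ) : ((Fin d₁ ⊕ Fin d₂) → ℝ) →L[ℝ] (Fin d₁ → ℝ) :=
  ContinuousLinearMap.pi fun a => ContinuousLinearMap.proj (Sum.inl a)

/-- fiber projection as a continuous linear map -/
def fibL (d₁ d₂ : ℕ) : ((Fin d₁ ⊕ Fin d₂) → ℝ) →L[ℝ] (Fin d₂ → ℝ) :=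
  ContinuousLinearMap.pi fun a => ContinuousLinearMap.proj (Sum.inr a)

lemma baseL_inl (a : Fin d₁) : baseL d₁ d₂ (Pi.single (Sum.inl a) 1) = Pi.single a 1 := by
  ext b; simp [baseL, Pi.single_apply]
lemma baseL_inr (a : Fin d₂) : baseL d₁ d₂ (Pi.single (Sum.inr a) 1) = 0 := by
  ext b; simp [baseL, Pi.single_apply]
lemma fibL_inr (a : Fin d₂) : fibL d₁ d₂ (Pi.single (Sum.inr a) 1) = Pi.single a 1 := by
  ext b; simp [fibL, Pi.single_apply]
lemma fibL_inl (a : Fin d₁) : fibL d₁ d₂ (Pi.single (Sum.inl a) 1) = 0 := by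
  ext b; simp [fibL, Pi.single_apply]

lemma hasFDerivAt_base {F : (Fin d₁ → ℝ) → ℝ} (hF : Differentiable ℝ F)
    (x : (Fin d₁ ⊕ Fin d₂) → ℝ) :
    HasFDerivAt (fun y => F (basePt y)) ((fderiv ℝ F (basePt x)).comp (baseL d₁ d₂)) x := by
  have h1 : HasFDerivAt (fun y : (Fin d₁ ⊕ Fin d₂) → ℝ => basePt y) (baseL d₁ d₂) x :=
    (baseL d₁ d₂).hasFDerivAt
  exact (hF (basePt x)).hasFDerivAt.comp x h1

lemma hasFDerivAt_fib {F : (Fin d₂ → ℝ) → ℝ} (hF : Differentiable ℝ F)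
    (x : (Fin d₁ ⊕ Fin d₂) → ℝ) :
    HasFDerivAt (fun y => F (fibPt y)) ((fderiv ℝ F (fibPt x)).comp (fibL d₁ d₂)) x := by
  have h1 : HasFDerivAt (fun y : (Fin d₁ ⊕ Fin d₂) → ℝ => fibPt y) (fibL d₁ d₂) x :=
    (fibL d₁ d₂).hasFDerivAt
  exact (hF (fibPt x)).hasFDerivAt.comp x h1

lemma pd_zero {ι : Type*} [Fintype ι] [DecidableEq ι] (ρ : ι) (x : ι → ℝ) :
    pd (fun _ => (0 : ℝ)) ρ x = 0 := by
  simp [pd]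

lemma pd_base_inl {F : (Fin d₁ → ℝ) → ℝ} (hF : Differentiable ℝ F) (a : Fin d₁)
    (x : (Fin d₁ ⊕ Fin d₂) → ℝ) :
    pd (fun y => F (basePt y)) (Sum.inl a) x = pd F a (basePt x) := by
  rw [pd, (hasFDerivAt_base hF x).fderiv, pd, ContinuousLinearMap.comp_apply, baseL_inl]

lemma pd_base_inr {F : (Fin d₁ → ℝ) → ℝ} (hF : Differentiable ℝ F) (i : Fin d₂)
    (x : (Fin d₁ ⊕ Fin d₂) → ℝ) :
    pd (fun y => F (basePt y)) (Sum.inr i) x = 0 := by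
  rw [pd, (hasFDerivAt_base hF x).fderiv, ContinuousLinearMap.comp_apply, baseL_inr, map_zero]

lemma hasFDerivAt_prod {f : (Fin d₁ → ℝ) → ℝ} {F : (Fin d₂ → ℝ) → ℝ} (hf : Differentiable ℝ f)
    (hF : Differentiable ℝ F) (x : (Fin d₁ ⊕ Fin d₂) → ℝ) :
    HasFDerivAt (fun y => f (basePt y) ^ 2 * F (fibPt y))
      (f (basePt x) ^ 2 • (fderiv ℝ F (fibPt x)).comp (fibL d₁ d₂) +
       F (fibPt x) • ((2 * f (basePt x)) • (fderiv ℝ f (basePt x)).comp (baseL d₁ d₂))) x := by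
  have := ((hasFDerivAt_base hf x).pow 2).mul (hasFDerivAt_fib hF x)
  refine HasFDerivAt.congr_fderiv this ?_
  ext y
  simp

lemma pd_prod_inl {f : (Fin d₁ → ℝ) → ℝ} {F : (Fin d₂ → ℝ) → ℝ} (hf : Differentiable ℝ f)
    (hF : Differentiable ℝ F) (a : Fin d₁) (x : (Fin d₁ ⊕ Fin d₂) → ℝ) :
    pd (fun y => f (basePt y) ^ 2 * F (fibPt y)) (Sum.inl a) x
      = 2 * f (basePt x) * pd f a (basePt x) * F (fibPt x) := by
  rw [pd, (hasFDerivAt_prod hf hF x).fderiv]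
  simp [fibL_inl, baseL_inl, pd]
  ring

lemma pd_prod_inr {f : (Fin d₁ → ℝ) → ℝ} {F : (Fin d₂ → ℝ) → ℝ} (hf : Differentiable ℝ f)
    (hF : Differentiable ℝ F) (i : Fin d₂) (x : (Fin d₁ ⊕ Fin d₂) → ℝ) :
    pd (fun y => f (basePt y) ^ 2 * F (fibPt y)) (Sum.inr i) x
      = f (basePt x) ^ 2 * pd F i (fibPt x) := by
  rw [pd, (hasFDerivAt_prod hf hF x).fderiv]
  simp [fibL_inr, baseL_inr, pd]

lemma ginv_mul {ι : Type*} [Fintype ι] [DecidableEq ι] {g : (ι → ℝ) → Matrix ι ι ℝ}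
    (hg : SmoothMetric g) (x : ι → ℝ) (i j : ι) :
    ∑ k, ginv g x i k * g x k j = if i = j then 1 else 0 := by
  have := congrFun (congrFun (Matrix.nonsing_inv_mul (g x) (hg.2.2 x)) i) j
  rw [Matrix.mul_apply, Matrix.one_apply] at this
  exact this

lemma mul_ginv {ι : Type*} [Fintype ι] [DecidableEq ι] {g : (ι → ℝ) → Matrix ι ι ℝ}
    (hg : SmoothMetric g) (x : ι → ℝ) (i j : ι) :
    ∑ k, g x i k * ginv g x k j = if i = j then 1 else 0 := by
  have := congrFun (congrFun (Matrix.mul_nonsing_inv (g x) (hg.2.2 x)) i) j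
  rw [Matrix.mul_apply, Matrix.one_apply] at this
  exact this

lemma ginv_warped {gB : (Fin d₁ → ℝ) → Matrix (Fin d₁) (Fin d₁) ℝ}
    {gF : (Fin d₂ → ℝ) → Matrix (Fin d₂) (Fin d₂) ℝ} {f : (Fin d₁ → ℝ) → ℝ}
    (hB : SmoothMetric gB) (hF : SmoothMetric gF) (hfpos : ∀ y, 0 < f y)
    (x : (Fin d₁ ⊕ Fin d₂) → ℝ) :
    ginv (warped gB gF f) x = Matrix.fromBlocks (ginv gB (basePt x)) 0 0
      ((f (basePt x) ^ 2)⁻¹ • ginv gF (fibPt x)) := by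
  have hw : warped gB gF f x = Matrix.fromBlocks (gB (basePt x)) 0 0
      ((f (basePt x) ^ 2) • gF (fibPt x)) := by
    ext μ ν
    rcases μ with a | i <;> rcases ν with b | j <;> simp [warped]
  have hne : f (basePt x) ^ 2 ≠ 0 := pow_ne_zero _ (hfpos _).ne'
  rw [ginv, hw]
  apply Matrix.inv_eq_left_inv
  rw [Matrix.fromBlocks_multiply]
  have h1 := Matrix.nonsing_inv_mul _ (hB.2.2 (basePt x))
  have h2 := Matrix.nonsing_inv_mul _ (hF.2.2 (fibPt x))
  simp [ginv, h1, h2, smul_smul, hne]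

section chr
variable {gB : (Fin d₁ → ℝ) → Matrix (Fin d₁) (Fin d₁) ℝ}
    {gF : (Fin d₂ → ℝ) → Matrix (Fin d₂) (Fin d₂) ℝ} {f : (Fin d₁ → ℝ) → ℝ}
    (x : (Fin d₁ ⊕ Fin d₂) → ℝ)

lemma metric_diff {ι : Type*} [Fintype ι] [DecidableEq ι] {g : (ι → ℝ) → Matrix ι ι ℝ}
    (hg : SmoothMetric g) (i j : ι) : Differentiable ℝ (fun x => g x i j) :=
  (hg.1 i j).differentiable (by simp)

lemma pd_w_ll (a b : Fin d₁) (ρ : Fin d₁ ⊕ Fin d₂) (hB : SmoothMetric gB) :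
    pd (fun y => warped gB gF f y (Sum.inl a) (Sum.inl b)) ρ x =
      Sum.elim (fun c => pd (fun y => gB y a b) c (basePt x)) (fun _ => 0) ρ := by
  rcases ρ with c | i
  · exact pd_base_inl (metric_diff hB a b) c x
  · exact pd_base_inr (metric_diff hB a b) i x

lemma pd_w_lr (a : Fin d₁) (j : Fin d₂) (ρ : Fin d₁ ⊕ Fin d₂) :
    pd (fun y => warped gB gF f y (Sum.inl a) (Sum.inr j)) ρ x = 0 := pd_zero ρ x

lemma pd_w_rl (a : Fin d₁) (j : Fin d₂) (ρ : Fin d₁ ⊕ Fin d₂) :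
    pd (fun y => warped gB gF f y (Sum.inr j) (Sum.inl a)) ρ x = 0 := pd_zero ρ x

lemma pd_w_rr (i j : Fin d₂) (ρ : Fin d₁ ⊕ Fin d₂) (hF : SmoothMetric gF)
    (hf : ContDiff ℝ (⊤ : ℕ∞) f) :
    pd (fun y => warped gB gF f y (Sum.inr i) (Sum.inr j)) ρ x =
      Sum.elim (fun a => 2 * f (basePt x) * pd f a (basePt x) * gF (fibPt x) i j)
        (fun k => f (basePt x) ^ 2 * pd (fun y => gF y i j) k (fibPt x)) ρ := by
  rcases ρ with c | k
  · exact pd_prod_inl (hf.differentiable (by simp)) (metric_diff hF i j) c x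
  · exact pd_prod_inr (hf.differentiable (by simp)) (metric_diff hF i j) k x

lemma Γ_lll (hB : SmoothMetric gB) (hF : SmoothMetric gF) (hf : ContDiff ℝ (⊤ : ℕ∞) f)
    (hfpos : ∀ y, 0 < f y)
    (x : (Fin d₁ ⊕ Fin d₂) → ℝ) (a b c : Fin d₁) : Γc (warped gB gF f) (Sum.inl a) (Sum.inl b) (Sum.inl c) x
    = Γc gB a b c (basePt x) := by
  simp only [Γc, ginv_warped hB hF hfpos, Fintype.sum_sum_type, pd_w_ll x _ _ _ hB, pd_w_lr,
    pd_w_rl, pd_w_rr x _ _ _ hF hf]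
  simp

lemma Γ_llr (hB : SmoothMetric gB) (hF : SmoothMetric gF) (hf : ContDiff ℝ (⊤ : ℕ∞) f)
    (hfpos : ∀ y, 0 < f y)
    (x : (Fin d₁ ⊕ Fin d₂) → ℝ) (a b : Fin d₁) (i : Fin d₂) :
    Γc (warped gB gF f) (Sum.inl a) (Sum.inl b) (Sum.inr i) x = 0 := by
  simp only [Γc, ginv_warped hB hF hfpos, Fintype.sum_sum_type, pd_w_ll x _ _ _ hB, pd_w_lr,
    pd_w_rl, pd_w_rr x _ _ _ hF hf]
  simp

lemma Γ_lrl (hB : SmoothMetric gB) (hF : SmoothMetric gF) (hf : ContDiff ℝ (⊤ : ℕ∞) f)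
    (hfpos : ∀ y, 0 < f y)
    (x : (Fin d₁ ⊕ Fin d₂) → ℝ) (a b : Fin d₁) (i : Fin d₂) :
    Γc (warped gB gF f) (Sum.inl a) (Sum.inr i) (Sum.inl b) x = 0 := by
  simp only [Γc, ginv_warped hB hF hfpos, Fintype.sum_sum_type, pd_w_ll x _ _ _ hB, pd_w_lr,
    pd_w_rl, pd_w_rr x _ _ _ hF hf]
  simp

lemma Γ_lrr (hB : SmoothMetric gB) (hF : SmoothMetric gF) (hf : ContDiff ℝ (⊤ : ℕ∞) f)
    (hfpos : ∀ y, 0 < f y)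
    (x : (Fin d₁ ⊕ Fin d₂) → ℝ) (a : Fin d₁) (i j : Fin d₂) :
    Γc (warped gB gF f) (Sum.inl a) (Sum.inr i) (Sum.inr j) x =
      - f (basePt x) * gradVec gB f (basePt x) a * gF (fibPt x) i j := by
  simp only [Γc, ginv_warped hB hF hfpos, Fintype.sum_sum_type, pd_w_ll x _ _ _ hB, pd_w_lr,
    pd_w_rl, pd_w_rr x _ _ _ hF hf, gradVec]
  simp [Finset.mul_sum, Finset.sum_mul]
  refine Finset.sum_congr rfl fun b _ => ?_
  ring

lemma Γ_rll (hB : SmoothMetric gB) (hF : SmoothMetric gF) (hf : ContDiff ℝ (⊤ : ℕ∞) f)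
    (hfpos : ∀ y, 0 < f y)
    (x : (Fin d₁ ⊕ Fin d₂) → ℝ) (a b : Fin d₁) (i : Fin d₂) :
    Γc (warped gB gF f) (Sum.inr i) (Sum.inl b) (Sum.inl a) x = 0 := by
  simp only [Γc, ginv_warped hB hF hfpos, Fintype.sum_sum_type, pd_w_ll x _ _ _ hB, pd_w_lr,
    pd_w_rl, pd_w_rr x _ _ _ hF hf]
  simp

lemma Γ_aux (hB : SmoothMetric gB) (hF : SmoothMetric gF) (hf : ContDiff ℝ (⊤ : ℕ∞) f)
    (hfpos : ∀ y, 0 < f y)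
    (x : (Fin d₁ ⊕ Fin d₂) → ℝ) (a : Fin d₁) (i j : Fin d₂) :
    1 / 2 * ∑ k, (f (basePt x) ^ 2)⁻¹ * ginv gF (fibPt x) i k *
        (2 * f (basePt x) * pd f a (basePt x) * gF (fibPt x) k j) =
      (if i = j then 1 else 0) * ((f (basePt x))⁻¹ * pd f a (basePt x)) := by
  rw [← ginv_mul hF (fibPt x) i j, Finset.mul_sum, Finset.sum_mul]
  refine Finset.sum_congr rfl fun k _ => ?_
  have hne := (hfpos (basePt x)).ne'
  field_simp

lemma Γ_rlr (hB : SmoothMetric gB) (hF : SmoothMetric gF) (hf : ContDiff ℝ (⊤ : ℕ∞) f)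
    (hfpos : ∀ y, 0 < f y)
    (x : (Fin d₁ ⊕ Fin d₂) → ℝ) (a : Fin d₁) (i j : Fin d₂) :
    Γc (warped gB gF f) (Sum.inr i) (Sum.inl a) (Sum.inr j) x =
      (if i = j then 1 else 0) * ((f (basePt x))⁻¹ * pd f a (basePt x)) := by
  rw [← Γ_aux hB hF hf hfpos]
  simp only [Γc, ginv_warped hB hF hfpos, Fintype.sum_sum_type, pd_w_ll x _ _ _ hB, pd_w_lr,
    pd_w_rl, pd_w_rr x _ _ _ hF hf, gradVec]
  simp

lemma Γ_rrl (hB : SmoothMetric gB) (hF : SmoothMetric gF) (hf : ContDiff ℝ (⊤ : ℕ∞) f)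
    (hfpos : ∀ y, 0 < f y)
    (x : (Fin d₁ ⊕ Fin d₂) → ℝ) (a : Fin d₁) (i j : Fin d₂) :
    Γc (warped gB gF f) (Sum.inr i) (Sum.inr j) (Sum.inl a) x =
      (if i = j then 1 else 0) * ((f (basePt x))⁻¹ * pd f a (basePt x)) := by
  rw [← Γ_aux hB hF hf hfpos]
  simp only [Γc, ginv_warped hB hF hfpos, Fintype.sum_sum_type, pd_w_ll x _ _ _ hB, pd_w_lr,
    pd_w_rl, pd_w_rr x _ _ _ hF hf, gradVec]
  simp

lemma Γ_rrr (hB : SmoothMetric gB) (hF : SmoothMetric gF) (hf : ContDiff ℝ (⊤ : ℕ∞) f)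
    (hfpos : ∀ y, 0 < f y)
    (x : (Fin d₁ ⊕ Fin d₂) → ℝ) (i j k : Fin d₂) :
    Γc (warped gB gF f) (Sum.inr i) (Sum.inr j) (Sum.inr k) x = Γc gF i j k (fibPt x) := by
  simp only [Γc, ginv_warped hB hF hfpos, Fintype.sum_sum_type, pd_w_ll x _ _ _ hB, pd_w_lr,
    pd_w_rl, pd_w_rr x _ _ _ hF hf, gradVec]
  simp
  refine Finset.sum_congr rfl fun k _ => ?_
  have hne := (hfpos (basePt x)).ne'
  field_simp

lemma covD_inl (hB : SmoothMetric gB) (hF : SmoothMetric gF) (hf : ContDiff ℝ (⊤ : ℕ∞) f)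
    (hfpos : ∀ y, 0 < f y)
    (γ V : ℝ → (Fin d₁ ⊕ Fin d₂) → ℝ) (u : ℝ) (a : Fin d₁) :
    covD (warped gB gF f) γ V u (Sum.inl a) =
      covD gB (baseCurve γ) (baseCurve V) u a
       - f (basePt (γ u)) * gradVec gB f (basePt (γ u)) a *
          sq gF (fibPt (γ u)) (vel (fibCurve γ) u) (fibPt (V u)) := by
  simp only [covD, Fintype.sum_sum_type, Γ_lll hB hF hf hfpos, Γ_llr hB hF hf hfpos,
    Γ_lrl hB hF hf hfpos, Γ_lrr hB hF hf hfpos, sq, Finset.mul_sum]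
  simp only [zero_mul, Finset.sum_const_zero, add_zero, zero_add]
  rw [sub_eq_add_neg, add_assoc, ← Finset.sum_neg_distrib]
  congr 2
  refine Finset.sum_congr rfl fun i _ => ?_
  rw [← Finset.sum_neg_distrib]
  refine Finset.sum_congr rfl fun j _ => ?_
  simp only [vel, fibCurve, fibPt]
  ring

lemma covD_inr (hB : SmoothMetric gB) (hF : SmoothMetric gF) (hf : ContDiff ℝ (⊤ : ℕ∞) f)
    (hfpos : ∀ y, 0 < f y)
    (γ V : ℝ → (Fin d₁ ⊕ Fin d₂) → ℝ) (u : ℝ) (i : Fin d₂) :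
    covD (warped gB gF f) γ V u (Sum.inr i) =
      covD gF (fibCurve γ) (fibCurve V) u i
       + (f (basePt (γ u)))⁻¹ * (∑ a, pd f a (basePt (γ u)) * vel (baseCurve γ) u a) * V u (Sum.inr i)
       + (f (basePt (γ u)))⁻¹ * (∑ a, pd f a (basePt (γ u)) * V u (Sum.inl a)) *
          vel (fibCurve γ) u i := by
  simp only [covD, Fintype.sum_sum_type, Γ_rll hB hF hf hfpos, Γ_rlr hB hF hf hfpos,
    Γ_rrl hB hF hf hfpos, Γ_rrr hB hF hf hfpos]
  simp only [zero_mul, Finset.sum_const_zero, add_zero, zero_add, ite_mul, one_mul,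
    Finset.sum_ite_eq, Finset.mem_univ, if_true, Finset.sum_add_distrib]
  rw [Finset.sum_comm (s := (Finset.univ : Finset (Fin d₂))) (t := (Finset.univ : Finset (Fin d₁)))]
  simp only [Finset.sum_ite_eq, Finset.mem_univ, if_true]
  have e1 : ∀ a, vel γ u (Sum.inl a) = vel (baseCurve γ) u a := fun a => rfl
  have e2 : ∀ a, vel γ u (Sum.inr a) = vel (fibCurve γ) u a := fun a => rfl
  have e4 : ∀ a w, V w (Sum.inr a) = fibCurve V w a := fun a w => rfl
  have e5 : fibCurve γ u = fibPt (γ u) := rfl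
  simp only [e1, e2, e4, e5]
  have s1 : ∑ a : Fin d₁, (f (basePt (γ u)))⁻¹ * pd f a (basePt (γ u)) * vel (fibCurve γ) u i *
      V u (Sum.inl a) = (f (basePt (γ u)))⁻¹ *
        (∑ a, pd f a (basePt (γ u)) * V u (Sum.inl a)) * vel (fibCurve γ) u i := by
    rw [Finset.mul_sum, Finset.sum_mul]
    exact Finset.sum_congr rfl fun a _ => by ring
  have s2 : ∑ a : Fin d₁, (f (basePt (γ u)))⁻¹ * pd f a (basePt (γ u)) * vel (baseCurve γ) u a *
      fibCurve V u i = (f (basePt (γ u)))⁻¹ *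
        (∑ a, pd f a (basePt (γ u)) * vel (baseCurve γ) u a) * fibCurve V u i := by
    rw [Finset.mul_sum, Finset.sum_mul]
    exact Finset.sum_congr rfl fun a _ => by ring
  rw [s1, s2]
  ring

end chr
section gen
variable {ι : Type*} [Fintype ι] [DecidableEq ι] {g : (ι → ℝ) → Matrix ι ι ℝ}

lemma smoothCurve_diff {c : ℝ → ι → ℝ} (hc : SmoothCurve c) (μ : ι) :
    Differentiable ℝ fun u => c u μ := (hc μ).differentiable (by simp)

lemma vel_smooth {c : ℝ → ι → ℝ} (hc : SmoothCurve c) : SmoothCurve (vel c) := fun μ =>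
  ((contDiff_infty_iff_deriv (𝕜 := ℝ)).1 (hc μ)).2

lemma curve_hasDerivAt {c : ℝ → ι → ℝ} (hc : SmoothCurve c) (u : ℝ) :
    HasDerivAt c (vel c u) u :=
  hasDerivAt_pi.2 fun μ => (smoothCurve_diff hc μ u).hasDerivAt

lemma fderiv_eq_sum_pd (F : (ι → ℝ) → ℝ) (x v : ι → ℝ) :
    fderiv ℝ F x v = ∑ ρ, pd F ρ x * v ρ := by
  conv_lhs => rw [pi_eq_sum_univ' v]
  rw [map_sum]
  refine Finset.sum_congr rfl fun ρ _ => ?_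
  rw [map_smul, smul_eq_mul, mul_comm, pd]

lemma comp_hasDerivAt {F : (ι → ℝ) → ℝ} (hF : Differentiable ℝ F) {c : ℝ → ι → ℝ}
    (hc : SmoothCurve c) (u : ℝ) :
    HasDerivAt (fun w => F (c w)) (∑ ρ, pd F ρ (c u) * vel c u ρ) u := by
  rw [← fderiv_eq_sum_pd]
  exact (hF (c u)).hasFDerivAt.comp_hasDerivAt u (curve_hasDerivAt hc u)

lemma Γ_lower (hg : SmoothMetric g) (x : ι → ℝ) (lam ρ σ : ι) :
    ∑ μ, g x lam μ * Γc g μ ρ σ x =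
      (1 / 2) * (pd (fun y => g y lam σ) ρ x + pd (fun y => g y lam ρ) σ x
        - pd (fun y => g y ρ σ) lam x) := by
  simp only [Γc]
  set K : ι → ℝ := fun ν => pd (fun y => g y ν σ) ρ x + pd (fun y => g y ν ρ) σ x
        - pd (fun y => g y ρ σ) ν x with hK
  have h1 : ∀ μ, g x lam μ * (1 / 2 * ∑ ν, ginv g x μ ν * K ν) =
      1 / 2 * ∑ ν, (g x lam μ * ginv g x μ ν) * K ν := by
    intro μ
    rw [mul_left_comm, Finset.mul_sum (f := fun ν => ginv g x μ ν * K ν)]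
    congr 1
    exact Finset.sum_congr rfl fun ν _ => by ring
  rw [Finset.sum_congr rfl fun μ _ => h1 μ, ← Finset.mul_sum, Finset.sum_comm]
  simp only [← Finset.sum_mul, mul_ginv hg x]
  simp [hK]

/-- Connection part of the covariant derivative. -/
def conn (g : (ι → ℝ) → Matrix ι ι ℝ) (x n v : ι → ℝ) (μ : ι) : ℝ :=
  ∑ ρ, ∑ σ, Γc g μ ρ σ x * n ρ * v σ

lemma sq_conn (hg : SmoothMetric g) (x n v w : ι → ℝ) :
    sq g x w (conn g x n v) = ∑ lam, ∑ σ, ∑ ρ,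
      (1 / 2) * (pd (fun y => g y lam σ) ρ x + pd (fun y => g y lam ρ) σ x
        - pd (fun y => g y ρ σ) lam x) * n ρ * v σ * w lam := by
  simp only [← Γ_lower hg, sq, conn, Finset.mul_sum, Finset.sum_mul]
  refine Finset.sum_congr rfl fun lam _ => ?_
  rw [Finset.sum_comm]
  conv_lhs => enter [2, ρ]; rw [Finset.sum_comm]
  rw [Finset.sum_comm]
  refine Finset.sum_congr rfl fun σ _ => Finset.sum_congr rfl fun ρ _ =>
    Finset.sum_congr rfl fun μ _ => ?_
  ring

lemma sq_symm (hg : SmoothMetric g) (x v w : ι → ℝ) : sq g x v w = sq g x w v := by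
  rw [sq, Finset.sum_comm, sq]
  refine Finset.sum_congr rfl fun μ _ => Finset.sum_congr rfl fun ν _ => ?_
  rw [hg.2.1 x ν μ]; ring

lemma sq_conn_add (hg : SmoothMetric g) (x n v w : ι → ℝ) :
    sq g x (conn g x n v) w + sq g x v (conn g x n w) =
      ∑ lam, ∑ σ, (∑ ρ, pd (fun y => g y lam σ) ρ x * n ρ) * v lam * w σ := by
  rw [sq_symm hg x _ w, sq_conn hg, sq_conn hg]
  conv_lhs => enter [1]; rw [Finset.sum_comm]
  rw [← Finset.sum_add_distrib]
  refine Finset.sum_congr rfl fun lam _ => ?_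
  rw [← Finset.sum_add_distrib]
  refine Finset.sum_congr rfl fun σ _ => ?_
  rw [← Finset.sum_add_distrib, Finset.sum_mul, Finset.sum_mul]
  refine Finset.sum_congr rfl fun ρ _ => ?_
  have e : ∀ a b, (fun y => g y a b) = (fun y => g y b a) := fun a b =>
    funext fun y => hg.2.1 y a b
  rw [e σ lam, e ρ lam, e σ ρ]
  ring

lemma sq_add_left (x v v' w : ι → ℝ) : sq g x (fun μ => v μ + v' μ) w = sq g x v w + sq g x v' w := by
  simp only [sq, ← Finset.sum_add_distrib]
  exact Finset.sum_congr rfl fun μ _ => Finset.sum_congr rfl fun ν _ => by ring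

lemma sq_add_right (x v w w' : ι → ℝ) : sq g x v (fun μ => w μ + w' μ) = sq g x v w + sq g x v w' := by
  simp only [sq, ← Finset.sum_add_distrib]
  exact Finset.sum_congr rfl fun μ _ => Finset.sum_congr rfl fun ν _ => by ring

lemma sq_smul_right (x v w : ι → ℝ) (k : ℝ) : sq g x v (fun μ => k * w μ) = k * sq g x v w := by
  simp only [sq, Finset.mul_sum]
  exact Finset.sum_congr rfl fun μ _ => Finset.sum_congr rfl fun ν _ => by ring

lemma sq_smul_left (x v w : ι → ℝ) (k : ℝ) : sq g x (fun μ => k * v μ) w = k * sq g x v w := by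
  simp only [sq, Finset.mul_sum]
  exact Finset.sum_congr rfl fun μ _ => Finset.sum_congr rfl fun ν _ => by ring

lemma sq_grad (hg : SmoothMetric g) (F : (ι → ℝ) → ℝ) (x v : ι → ℝ) :
    sq g x v (gradVec g F x) = ∑ a, pd F a x * v a := by
  simp only [sq, gradVec]
  refine Finset.sum_congr rfl fun μ _ => ?_
  have h1 : ∀ ν, g x μ ν * v μ * ∑ l, ginv g x ν l * pd F l x
      = v μ * ∑ l, (g x μ ν * ginv g x ν l) * pd F l x := by
    intro ν
    rw [Finset.mul_sum, Finset.mul_sum]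
    exact Finset.sum_congr rfl fun l _ => by ring
  rw [Finset.sum_congr rfl fun ν _ => h1 ν, ← Finset.mul_sum, Finset.sum_comm]
  simp only [← Finset.sum_mul, mul_ginv hg x]
  simp [mul_comm]

lemma sq_hasDerivAt (hg : SmoothMetric g) {c V W : ℝ → ι → ℝ} (hc : SmoothCurve c)
    (hV : SmoothCurve V) (hW : SmoothCurve W) (u : ℝ) :
    HasDerivAt (fun w => sq g (c w) (V w) (W w))
      (sq g (c u) (covD g c V u) (W u) + sq g (c u) (V u) (covD g c W u)) u := by
  have h : HasDerivAt (fun w => sq g (c w) (V w) (W w))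
      (∑ μ, ∑ ν, (((∑ ρ, pd (fun y => g y μ ν) ρ (c u) * vel c u ρ) * V u μ
        + g (c u) μ ν * vel V u μ) * W u ν + g (c u) μ ν * V u μ * vel W u ν)) u := by
    unfold sq
    refine HasDerivAt.fun_sum fun μ _ => HasDerivAt.fun_sum fun ν _ => ?_
    exact ((comp_hasDerivAt (metric_diff hg μ ν) hc u).mul
      (smoothCurve_diff hV μ u).hasDerivAt).mul (smoothCurve_diff hW ν u).hasDerivAt
  convert h using 1
  have e1 : covD g c V u = fun μ => vel V u μ + conn g (c u) (vel c u) (V u) μ := rfl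
  have e2 : covD g c W u = fun μ => vel W u μ + conn g (c u) (vel c u) (W u) μ := rfl
  rw [e1, e2, sq_add_left, sq_add_right]
  have := sq_conn_add hg (c u) (vel c u) (V u) (W u)
  have e3 : ∀ p q r s : ℝ, p + q + (r + s) = (q + s) + p + r := fun p q r s => by ring
  rw [e3, this]
  simp only [sq, ← Finset.sum_add_distrib]
  exact Finset.sum_congr rfl fun μ _ => Finset.sum_congr rfl fun ν _ => by ring

lemma covD_smul {c W : ℝ → ι → ℝ} {φ : ℝ → ℝ} {φ' u : ℝ} (hφ : HasDerivAt φ φ' u)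
    (hW : SmoothCurve W) (μ : ι) :
    covD g c (fun w ν => φ w * W w ν) u μ = φ' * W u μ + φ u * covD g c W u μ := by
  simp only [covD]
  rw [(hφ.fun_mul (smoothCurve_diff hW μ u).hasDerivAt).deriv]
  have : ∑ ρ, ∑ σ, Γc g μ ρ σ (c u) * vel c u ρ * (φ u * W u σ) =
      φ u * ∑ ρ, ∑ σ, Γc g μ ρ σ (c u) * vel c u ρ * W u σ := by
    simp only [Finset.mul_sum]
    exact Finset.sum_congr rfl fun μ _ => Finset.sum_congr rfl fun ν _ => by ring
  rw [this]; ring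

lemma covD_sub {c V W : ℝ → ι → ℝ} {u : ℝ} (hV : ∀ μ, DifferentiableAt ℝ (fun w => V w μ) u)
    (hW : ∀ μ, DifferentiableAt ℝ (fun w => W w μ) u) (μ : ι) :
    covD g c (fun w ν => V w ν - W w ν) u μ = covD g c V u μ - covD g c W u μ := by
  simp only [covD]
  rw [((hV μ).hasDerivAt.fun_sub (hW μ).hasDerivAt).deriv]
  have : ∑ ρ, ∑ σ, Γc g μ ρ σ (c u) * vel c u ρ * (V u σ - W u σ) =
      ∑ ρ, ∑ σ, Γc g μ ρ σ (c u) * vel c u ρ * V u σ -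
       ∑ ρ, ∑ σ, Γc g μ ρ σ (c u) * vel c u ρ * W u σ := by
    simp only [← Finset.sum_sub_distrib]
    exact Finset.sum_congr rfl fun μ _ => Finset.sum_congr rfl fun ν _ => by ring
  rw [this]; ring

lemma pd_continuous {F : (ι → ℝ) → ℝ} (hF : ContDiff ℝ (⊤ : ℕ∞) F) (ρ : ι) :
    Continuous (pd F ρ) :=
  (hF.continuous_fderiv (by simp)).clm_apply continuous_const

lemma ginv_continuous (hg : SmoothMetric g) (μ ν : ι) : Continuous fun x => ginv g x μ ν := by
  have h0 : Continuous g := continuous_pi fun i => continuous_pi fun j => (hg.1 i j).continuous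
  have h1 : Continuous fun x => (g x)⁻¹ := by
    refine continuous_iff_continuousAt.2 fun x => ?_
    refine ContinuousAt.comp (g := fun A : Matrix ι ι ℝ => A⁻¹) ?_ h0.continuousAt
    refine continuousAt_matrix_inv _ ?_
    have := (hg.2.2 x).ne_zero
    rw [Ring.inverse_eq_inv']
    exact continuousAt_inv₀ this
  exact (continuous_apply ν).comp ((continuous_apply μ).comp h1)

lemma Γ_continuous (hg : SmoothMetric g) (μ ρ σ : ι) : Continuous (Γc g μ ρ σ) := by
  unfold Γc
  refine continuous_const.mul (continuous_finsetSum _ fun ν _ => (ginv_continuous hg μ ν).mul ?_)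
  exact ((pd_continuous (hg.1 _ _) _).add (pd_continuous (hg.1 _ _) _)).sub
    (pd_continuous (hg.1 _ _) _)

lemma lin_ode_zero (A : ℝ → ι → ι → ℝ) (hA : ∀ i j, Continuous fun u => A u i j)
    (Y : ℝ → ι → ℝ) (hY : ∀ u i, HasDerivAt (fun w => Y w i) (∑ j, A u i j * Y u j) u)
    (h0 : Y 0 = 0) (u : ℝ) : Y u = 0 := by
  set M : ℝ → ℝ := fun u => ∑ i, ∑ j, |A u i j| with hM
  have hMc : Continuous M := continuous_finsetSum _ fun i _ => continuous_finsetSum _ fun j _ =>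
    (hA i j).abs
  obtain ⟨K, hK⟩ := (isCompact_Icc (a := -(|u| + 1)) (b := |u| + 1)).exists_bound_of_continuousOn
    hMc.continuousOn
  have hlip : ∀ t ∈ Set.Ioo (-(|u| + 1)) (|u| + 1),
      LipschitzOnWith K.toNNReal (fun y i => ∑ j, A t i j * y j) (Set.univ : Set (ι → ℝ)) := by
    intro t ht
    refine LipschitzOnWith.of_dist_le_mul fun y _ z _ => ?_
    have hKt := hK t (Set.Ioo_subset_Icc_self ht)
    have hM0 : 0 ≤ M t := Finset.sum_nonneg fun i _ => Finset.sum_nonneg fun j _ => abs_nonneg _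
    rw [Real.norm_of_nonneg hM0] at hKt
    rw [Real.coe_toNNReal _ (hM0.trans hKt)]
    refine le_trans ?_ (mul_le_mul_of_nonneg_right hKt dist_nonneg)
    refine (dist_pi_le_iff (mul_nonneg hM0 dist_nonneg)).2 fun i => ?_
    rw [Real.dist_eq, ← Finset.sum_sub_distrib]
    calc |∑ j, (A t i j * y j - A t i j * z j)| ≤ ∑ j, |A t i j * y j - A t i j * z j| :=
          Finset.abs_sum_le_sum_abs _ _
      _ ≤ ∑ j, |A t i j| * dist y z := by
          refine Finset.sum_le_sum fun j _ => ?_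
          rw [← mul_sub, abs_mul]
          exact mul_le_mul_of_nonneg_left (dist_le_pi_dist y z j) (abs_nonneg _)
      _ = (∑ j, |A t i j|) * dist y z := (Finset.sum_mul _ _ _).symm
      _ ≤ M t * dist y z := by
          refine mul_le_mul_of_nonneg_right ?_ dist_nonneg
          exact Finset.single_le_sum (f := fun i => ∑ j, |A t i j|)
            (fun i _ => Finset.sum_nonneg fun j _ => abs_nonneg _) (Finset.mem_univ i)
  have h1 : (0 : ℝ) ∈ Set.Ioo (-(|u| + 1)) (|u| + 1) := by
    constructor <;> have := abs_nonneg u <;> linarith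
  have h2 : u ∈ Set.Ioo (-(|u| + 1)) (|u| + 1) := by
    constructor <;> have := abs_le.1 (le_refl |u|) <;> linarith [this.1, this.2]
  refine ODE_solution_unique_of_mem_Ioo (f := Y) (g := fun _ => 0) hlip h1
    (fun t _ => ⟨hasDerivAt_pi.2 fun i => hY t i, Set.mem_univ _⟩)
    (fun t _ => ⟨?_, Set.mem_univ _⟩) h0 h2
  convert hasDerivAt_const t (0 : ι → ℝ) using 1
  ext i; simp

end gen
end helpers

/-- For a parallelly transported field `E` along a null geodesic of
a warped product, with initial value orthogonal to the tangent and with vanishing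
fiber component: `Ē^i = f h N̄^i`; `ĝ(Ê,Ê) + C h² = b`; `ĝ(N̂,Ê) = −C h/f`; the
field `ℰ̂ = Ê − f h N̂` is orthonormal data along the base projection with
`N̂^b∇̂_bℰ̂^a = −(d(hf)/du) N̂^a` and `ℰ̂(0) = ê`; and for `C ≠ 0` it is
Fermi–Walker transported along the (timelike) base projection. -/
theorem fermi_walker_of_parallel_transport {d₁ d₂ : ℕ}
    (gB : (Fin d₁ → ℝ) → Matrix (Fin d₁) (Fin d₁) ℝ)
    (gF : (Fin d₂ → ℝ) → Matrix (Fin d₂) (Fin d₂) ℝ)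
    (f : (Fin d₁ → ℝ) → ℝ)
    (hB : SmoothMetric gB) (hF : SmoothMetric gF)
    (hf : ContDiff ℝ (⊤ : ℕ∞) f) (hfpos : ∀ y, 0 < f y)
    (γ : ℝ → (Fin d₁ ⊕ Fin d₂) → ℝ) (hγs : SmoothCurve γ)
    (hgeo : IsGeodesic (warped gB gF f) γ)
    (hnull : ∀ u, sq (warped gB gF f) (γ u) (vel γ u) (vel γ u) = 0)
    (C : ℝ) (hC0 : 0 ≤ C)
    (hCfib : ∀ u, sq gF (fibPt (γ u)) (vel (fibCurve γ) u) (vel (fibCurve γ) u)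
        = C / (f (basePt (γ u))) ^ 4)
    (hCbase : ∀ u, sq gB (basePt (γ u)) (vel (baseCurve γ) u) (vel (baseCurve γ) u)
        = -C / (f (basePt (γ u))) ^ 2)
    (E : ℝ → (Fin d₁ ⊕ Fin d₂) → ℝ) (hEs : SmoothCurve E)
    (hE : IsParallel (warped gB gF f) γ E)
    (hfib0 : ∀ i, E 0 (Sum.inr i) = 0)
    (horth : sq (warped gB gF f) (γ 0) (vel γ 0) (E 0) = 0)
    (b : ℝ) (hb : b = sq (warped gB gF f) (γ 0) (E 0) (E 0)) :
    ∃ h : ℝ → ℝ,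
      h 0 = 0 ∧
      (∀ u, HasDerivAt h
        (∑ a, E u (Sum.inl a) * pd (fun y => (f y)⁻¹) a (basePt (γ u))) u) ∧
      (∀ (u : ℝ) (i : Fin d₂),
        E u (Sum.inr i) = f (basePt (γ u)) * h u * vel (fibCurve γ) u i) ∧
      (∀ u : ℝ, sq gB (basePt (γ u)) (fun a => E u (Sum.inl a)) (fun a => E u (Sum.inl a))
          + C * (h u) ^ 2 = b) ∧
      (∀ u : ℝ, sq gB (basePt (γ u)) (vel (baseCurve γ) u) (fun a => E u (Sum.inl a))
          = -C * h u / f (basePt (γ u))) ∧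
      (∀ u : ℝ, sq gB (basePt (γ u)) (calE f γ E h u) (calE f γ E h u) = b) ∧
      (∀ u : ℝ, sq gB (basePt (γ u)) (vel (baseCurve γ) u) (calE f γ E h u) = 0) ∧
      (∀ (u : ℝ) (a : Fin d₁),
        covD gB (baseCurve γ) (calE f γ E h) u a
          = -(deriv (fun w => h w * f (basePt (γ w))) u) * vel (baseCurve γ) u a) ∧
      (∀ a, calE f γ E h 0 a = E 0 (Sum.inl a)) ∧
      (C ≠ 0 →
        ∀ (u : ℝ) (a : Fin d₁),
          (fwS f C γ u)⁻¹ * covD gB (baseCurve γ) (calE f γ E h) u a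
            = sq gB (basePt (γ u)) (calE f γ E h u) (fwA gB f C γ u) * fwU f C γ u a
              - sq gB (basePt (γ u)) (calE f γ E h u) (fwU f C γ u) * fwA gB f C γ u a) := by
  have hfd : Differentiable ℝ f := hf.differentiable (by simp)
  have hne : ∀ y, f y ≠ 0 := fun y => (hfpos y).ne'
  have hcB : SmoothCurve (baseCurve γ) := fun a => hγs (Sum.inl a)
  have hcF : SmoothCurve (fibCurve γ) := fun a => hγs (Sum.inr a)
  have hEB : SmoothCurve (baseCurve E) := fun a => hEs (Sum.inl a)
  have hEF : SmoothCurve (fibCurve E) := fun a => hEs (Sum.inr a)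
  have hNB := vel_smooth hcB
  have hNF := vel_smooth hcF
  have hBc : Continuous fun u => basePt (γ u) := continuous_pi fun a => (hcB a).continuous
  have hFc : Continuous fun u => fibPt (γ u) := continuous_pi fun a => (hcF a).continuous
  -- scalars along the curve
  set F : ℝ → ℝ := fun u => f (basePt (γ u)) with hFdef
  set F' : ℝ → ℝ := fun u => ∑ a, pd f a (basePt (γ u)) * vel (baseCurve γ) u a with hF'def
  set Ef : ℝ → ℝ := fun u => ∑ a, pd f a (basePt (γ u)) * E u (Sum.inl a) with hEfdef
  have hFne : ∀ u, F u ≠ 0 := fun u => hne _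
  have hFpos : ∀ u, 0 < F u := fun u => hfpos _
  have hFder : ∀ u, HasDerivAt F (F' u) u := fun u => comp_hasDerivAt hfd hcB u
  have hFcont : Continuous F := hf.continuous.comp hBc
  have hF'cont : Continuous F' := continuous_finsetSum _ fun a _ =>
    ((pd_continuous hf a).comp hBc).mul (hNB a).continuous
  have hEfcont : Continuous Ef := continuous_finsetSum _ fun a _ =>
    ((pd_continuous hf a).comp hBc).mul (hEB a).continuous
  have hH : ∀ u, ∑ a, E u (Sum.inl a) * pd (fun y => (f y)⁻¹) a (basePt (γ u))
      = -Ef u / F u ^ 2 := by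
    intro u
    have h1 : ∀ a, pd (fun y => (f y)⁻¹) a (basePt (γ u)) = -pd f a (basePt (γ u)) / F u ^ 2 := by
      intro a
      have h2 : HasFDerivAt (fun y => (f y)⁻¹) _ (basePt (γ u)) :=
        (hasDerivAt_inv (hne (basePt (γ u)))).comp_hasFDerivAt (basePt (γ u))
          (hfd (basePt (γ u))).hasFDerivAt
      rw [pd, h2.fderiv, pd]
      simp only [ContinuousLinearMap.smul_apply, smul_eq_mul, hFdef]
      ring
    simp only [h1, hEfdef, neg_div, Finset.sum_div, ← Finset.sum_neg_distrib]
    exact Finset.sum_congr rfl fun a _ => by ring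
  have hcont : Continuous fun u => -Ef u / F u ^ 2 :=
    hEfcont.neg.div (hFcont.pow 2) fun u => pow_ne_zero _ (hFne u)
  obtain ⟨h, h0, hder⟩ : ∃ h : ℝ → ℝ, h 0 = 0 ∧ ∀ u, HasDerivAt h (-Ef u / F u ^ 2) u :=
    ⟨fun u => ∫ t in (0 : ℝ)..u, -Ef t / F t ^ 2, by simp, fun u =>
      intervalIntegral.integral_hasDerivAt_right (hcont.intervalIntegrable _ _)
        hcont.aestronglyMeasurable.stronglyMeasurableAtFilter hcont.continuousAt⟩
  have hFh : ∀ u, HasDerivAt (fun w => F w * h w) (F' u * h u + F u * (-Ef u / F u ^ 2)) u :=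
    fun u => (hFder u).fun_mul (hder u)
  -- fiber part
  have geoF : ∀ u i, covD gF (fibCurve γ) (vel (fibCurve γ)) u i
      = -2 * (F u)⁻¹ * F' u * vel (fibCurve γ) u i := by
    intro u i
    have h1 := hgeo u (Sum.inr i)
    rw [covD_inr hB hF hf hfpos] at h1
    change covD gF (fibCurve γ) (vel (fibCurve γ)) u i + (F u)⁻¹ * F' u * vel (fibCurve γ) u i
      + (F u)⁻¹ * F' u * vel (fibCurve γ) u i = 0 at h1
    linear_combination h1
  have parF : ∀ u i, covD gF (fibCurve γ) (fibCurve E) u i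
      = -(F u)⁻¹ * F' u * fibCurve E u i - (F u)⁻¹ * Ef u * vel (fibCurve γ) u i := by
    intro u i
    have h1 := hE u (Sum.inr i)
    rw [covD_inr hB hF hf hfpos] at h1
    change covD gF (fibCurve γ) (fibCurve E) u i + (F u)⁻¹ * F' u * fibCurve E u i
      + (F u)⁻¹ * Ef u * vel (fibCurve γ) u i = 0 at h1
    linear_combination h1
  have hfib : ∀ u i, E u (Sum.inr i) = F u * h u * vel (fibCurve γ) u i := by
    set Y : ℝ → Fin d₂ → ℝ := fun u i => fibCurve E u i - F u * h u * vel (fibCurve γ) u i with hY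
    have hWd : ∀ u i, DifferentiableAt ℝ (fun w => F w * h w * vel (fibCurve γ) w i) u :=
      fun u i => ((hFh u).differentiableAt).fun_mul (smoothCurve_diff hNF i u)
    have hYd : ∀ u i, DifferentiableAt ℝ (fun w => Y w i) u := fun u i =>
      (smoothCurve_diff hEF i u).fun_sub (hWd u i)
    have hYc : ∀ u i, covD gF (fibCurve γ) Y u i = -(F u)⁻¹ * F' u * Y u i := by
      intro u i
      have h1 : covD gF (fibCurve γ) Y u i = _ :=
        covD_sub (fun i => smoothCurve_diff hEF i u) (fun i => hWd u i) i
      rw [h1, covD_smul (hFh u) hNF, parF, geoF]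
      have := hFne u
      simp only [hY]
      field_simp
      ring
    have hz := lin_ode_zero (fun u i σ => -(∑ ρ, Γc gF i ρ σ (fibPt (γ u)) * vel (fibCurve γ) u ρ)
        - (F u)⁻¹ * F' u * (if i = σ then 1 else 0)) ?_ Y ?_ ?_
    · intro u i
      have := congrFun (hz u) i
      simp only [hY, Pi.zero_apply] at this
      exact sub_eq_zero.1 this
    · intro i j
      refine Continuous.sub (Continuous.neg (continuous_finsetSum _ fun ρ _ =>
        ((Γ_continuous hF i ρ j).comp hFc).mul (hNF ρ).continuous)) ?_
      exact ((hFcont.inv₀ hFne).mul hF'cont).mul continuous_const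
    · intro u i
      refine (hYd u i).hasDerivAt.congr_deriv ?_
      have h1 := hYc u i
      rw [covD, Finset.sum_comm] at h1
      simp only [sub_mul, neg_mul, Finset.sum_sub_distrib, Finset.sum_neg_distrib, mul_ite, mul_one,
        mul_zero, ite_mul, zero_mul, Finset.sum_ite_eq, Finset.mem_univ, if_true, Finset.sum_mul]
      change _ + ∑ y, ∑ x, Γc gF i x y (fibPt (γ u)) * vel (fibCurve γ) u x * Y u y = _ at h1
      linear_combination h1
    · ext i
      simp only [hY, h0, Pi.zero_apply, mul_zero, zero_mul, sub_zero]
      exact hfib0 i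
  -- base part
  have geoB : ∀ u a, covD gB (baseCurve γ) (vel (baseCurve γ)) u a
      = C / F u ^ 3 * gradVec gB f (basePt (γ u)) a := by
    intro u a
    have h1 := hgeo u (Sum.inl a)
    rw [covD_inl hB hF hf hfpos] at h1
    change covD gB (baseCurve γ) (vel (baseCurve γ)) u a - F u * gradVec gB f (basePt (γ u)) a *
      sq gF (fibPt (γ u)) (vel (fibCurve γ) u) (vel (fibCurve γ) u) = 0 at h1
    rw [hCfib] at h1
    change _ - F u * _ * (C / F u ^ 4) = 0 at h1
    rw [sub_eq_zero.1 h1]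
    have := hFne u
    field_simp
  have parB : ∀ u a, covD gB (baseCurve γ) (baseCurve E) u a
      = C * h u / F u ^ 2 * gradVec gB f (basePt (γ u)) a := by
    intro u a
    have h1 := hE u (Sum.inl a)
    rw [covD_inl hB hF hf hfpos] at h1
    have h2 : fibPt (E u) = fun i => F u * h u * vel (fibCurve γ) u i := funext fun i => hfib u i
    rw [h2, sq_smul_right, hCfib] at h1
    change _ - F u * _ * (F u * h u * (C / F u ^ 4)) = 0 at h1
    rw [sub_eq_zero.1 h1]
    have := hFne u
    field_simp
  have geoB' : ∀ u, covD gB (baseCurve γ) (vel (baseCurve γ)) u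
      = fun a => C / F u ^ 3 * gradVec gB f (basePt (γ u)) a := fun u => funext (geoB u)
  have parB' : ∀ u, covD gB (baseCurve γ) (baseCurve E) u
      = fun a => C * h u / F u ^ 2 * gradVec gB f (basePt (γ u)) a := fun u => funext (parB u)
  have hbc : ∀ u, baseCurve γ u = basePt (γ u) := fun u => rfl
  have gradE : ∀ u, sq gB (basePt (γ u)) (baseCurve E u) (gradVec gB f (basePt (γ u))) = Ef u :=
    fun u => sq_grad hB f _ _
  have gradN : ∀ u, sq gB (basePt (γ u)) (vel (baseCurve γ) u) (gradVec gB f (basePt (γ u))) = F' u :=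
    fun u => sq_grad hB f _ _
  have hsplit : ∀ v : Fin d₁ ⊕ Fin d₂ → ℝ, sq (warped gB gF f) (γ 0) v (E 0) =
      sq gB (basePt (γ 0)) (basePt v) (baseCurve E 0) := by
    intro v
    simp only [sq, Fintype.sum_sum_type, hfib0, mul_zero, Finset.sum_const_zero, add_zero]
    simp [warped, basePt, baseCurve]
  have hEE : ∀ u, sq gB (basePt (γ u)) (baseCurve E u) (baseCurve E u) + C * h u ^ 2 = b := by
    have hd : ∀ u, HasDerivAt (fun u => sq gB (baseCurve γ u) (baseCurve E u) (baseCurve E u)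
        + C * h u ^ 2) 0 u := by
      intro u
      have h1 := (sq_hasDerivAt hB hcB hEB hEB u).fun_add (((hder u).fun_pow 2).const_mul C)
      refine h1.congr_deriv ?_
      rw [parB', sq_symm hB _ _ (baseCurve E u), sq_smul_right, hbc, gradE]
      have := hFne u
      field_simp
      push_cast
      ring
    intro u
    have h2 := is_const_of_deriv_eq_zero (fun u => (hd u).differentiableAt)
      (fun u => (hd u).deriv) u 0
    change sq gB (basePt (γ u)) (baseCurve E u) (baseCurve E u) + C * h u ^ 2 =
      sq gB (basePt (γ 0)) (baseCurve E 0) (baseCurve E 0) + C * h 0 ^ 2 at h2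
    rw [h2, hb, hsplit, h0]
    simp [baseCurve]
  have hNE : ∀ u, sq gB (basePt (γ u)) (vel (baseCurve γ) u) (baseCurve E u) = -C * h u / F u := by
    have hd : ∀ u, HasDerivAt (fun u => sq gB (baseCurve γ u) (vel (baseCurve γ) u) (baseCurve E u)
        + C * (h u / F u)) 0 u := by
      intro u
      have h1 := (sq_hasDerivAt hB hcB hNB hEB u).fun_add
        (((hder u).fun_div (hFder u) (hFne u)).const_mul C)
      refine h1.congr_deriv ?_
      rw [parB', geoB', sq_symm hB _ _ (baseCurve E u), sq_smul_right, sq_smul_right, hbc, gradE,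
        gradN]
      have := hFne u
      field_simp
      ring
    intro u
    have h2 := is_const_of_deriv_eq_zero (fun u => (hd u).differentiableAt)
      (fun u => (hd u).deriv) u 0
    change sq gB (basePt (γ u)) (vel (baseCurve γ) u) (baseCurve E u) + C * (h u / F u) =
      sq gB (basePt (γ 0)) (basePt (vel γ 0)) (baseCurve E 0) + C * (h 0 / F 0) at h2
    rw [← hsplit, horth, h0] at h2
    linear_combination h2
  -- the field calE
  have hcal : ∀ u, calE f γ E h u = fun a => baseCurve E u a +
      (-(F u * h u)) * vel (baseCurve γ) u a := by
    intro u; ext a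
    simp only [calE, baseCurve, basePt, hFdef]
    ring
  have hNcal : ∀ u, sq gB (basePt (γ u)) (vel (baseCurve γ) u) (calE f γ E h u) = 0 := by
    intro u
    rw [hcal, sq_add_right, sq_smul_right, hNE, hCbase]
    change _ + _ * (-C / F u ^ 2) = 0
    have := hFne u
    field_simp
    ring
  have hEcal : ∀ u, sq gB (basePt (γ u)) (calE f γ E h u) (calE f γ E h u) = b := by
    intro u
    have h1 : sq gB (basePt (γ u)) (calE f γ E h u) (calE f γ E h u) =
        sq gB (basePt (γ u)) (baseCurve E u) (calE f γ E h u) := by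
      conv_lhs => rw [show sq gB (basePt (γ u)) (calE f γ E h u) (calE f γ E h u) =
        sq gB (basePt (γ u)) (fun a => baseCurve E u a +
          (-(F u * h u)) * vel (baseCurve γ) u a) (calE f γ E h u) by rw [← hcal]]
      rw [sq_add_left, sq_smul_left, hNcal]
      ring
    rw [h1, hcal, sq_add_right, sq_smul_right, sq_symm hB _ _ (vel (baseCurve γ) u), hNE, ← hEE u]
    have := hFne u
    field_simp
  have hcov : ∀ u a, covD gB (baseCurve γ) (calE f γ E h) u a
      = -(F' u * h u + F u * (-Ef u / F u ^ 2)) * vel (baseCurve γ) u a := by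
    intro u a
    have h1 : covD gB (baseCurve γ) (calE f γ E h) u a = _ :=
      covD_sub (V := baseCurve E) (W := fun w a => F w * h w * vel (baseCurve γ) w a)
        (fun i => smoothCurve_diff hEB i u)
        (fun i => ((hFh u).differentiableAt).fun_mul (smoothCurve_diff hNB i u)) a
    rw [h1, covD_smul (hFh u) hNB, parB, geoB]
    have := hFne u
    field_simp
    ring
  refine ⟨h, h0, fun u => by rw [hH]; exact hder u, hfib, hEE, hNE, hEcal, hNcal, ?_, ?_, ?_⟩
  · intro u a
    rw [hcov]
    have h1 : (fun w => h w * F w) = fun w => F w * h w := funext fun w => mul_comm _ _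
    change _ = -(deriv (fun w => h w * F w) u) * _
    rw [h1, (hFh u).deriv]
  · intro a
    simp [calE, h0]
  · intro hC u a
    have hCpos : 0 < C := lt_of_le_of_ne hC0 (Ne.symm hC)
    have hs : Real.sqrt C ≠ 0 := (Real.sqrt_pos.2 hCpos).ne'
    have hss : Real.sqrt C ^ 2 = C := Real.sq_sqrt hC0
    have hS : ∀ u, (fwS f C γ u)⁻¹ = (Real.sqrt C)⁻¹ * F u := by
      intro u; simp only [fwS, hFdef]; rw [inv_div, div_eq_mul_inv, mul_comm]
    have hU : (fun w => fwU f C γ w) = fun w a => ((Real.sqrt C)⁻¹ * F w) * vel (baseCurve γ) w a := by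
      funext w a; simp only [fwU, hS]
    have hA : fwA gB f C γ u = fun a => ((Real.sqrt C)⁻¹ * F u) * ((Real.sqrt C)⁻¹ * F' u) *
        vel (baseCurve γ) u a + ((Real.sqrt C)⁻¹ * F u) * ((Real.sqrt C)⁻¹ * F u) * (C / F u ^ 3) *
          gradVec gB f (basePt (γ u)) a := by
      funext a
      simp only [fwA]
      rw [hU, covD_smul ((hFder u).const_mul _) hNB, hS, geoB]
      ring
    have hgc : sq gB (basePt (γ u)) (calE f γ E h u) (gradVec gB f (basePt (γ u))) =
        Ef u - F u * h u * F' u := by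
      rw [hcal, sq_add_left, sq_smul_left, gradE, gradN]; ring
    have hUu : fwU f C γ u = fun a => ((Real.sqrt C)⁻¹ * F u) * vel (baseCurve γ) u a :=
      congrFun hU u
    have hcN : sq gB (basePt (γ u)) (calE f γ E h u) (vel (baseCurve γ) u) = 0 := by
      rw [sq_symm hB]; exact hNcal u
    rw [hA, hUu, sq_add_right, sq_smul_right, sq_smul_right, sq_smul_right, hgc, hcN, hcov, hS]
    have := hFne u
    have e : (Real.sqrt C)⁻¹ * (Real.sqrt C)⁻¹ * C = 1 := by
      field_simp; exact hss.symm
    have e2 : Real.sqrt C⁻¹ = (Real.sqrt C)⁻¹ := Real.sqrt_inv C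
    generalize (Real.sqrt C)⁻¹ = q at *
    have e3 : q * F u * (q * F u) * (C / F u ^ 3) = 1 / F u := by
      field_simp
      linear_combination e
    rw [e3]
    field_simp
    ring

end Paper
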